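/- Fix an integer n ≥ 2, set t_k = k/n for k = 0, …, n−1, and define weights w*_0 = 6n²/(12n³ + n + 3), w*_k = 12n²/(12n³ + n + 3) for 1 ≤ k ≤ n − 2, and w*_{n-1} = 18n²/(12n³ + n + 3). Then ∑_{k=0}^{n-1} ∑_{ℓ=0}^{n-1} w*_k w*_ℓ (46/45 − t_k²/6 + t_k³/12 − t_k⁴/24 + t_k² t_ℓ/4 − t_ℓ²/6 + t_k t_ℓ²/4 − t_k² t_ℓ²/4 + t_ℓ³/12 − t_ℓ⁴/24 + |t_k − t_ℓ|³/12) = (720n⁶ + n² + 60n − 45)/(5(12n³ + n + 3)²). -/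

import Mathlib

/-- The optimal kernel cubature weights for the left-Riemann nodes `t_k = k/n`. -/
noncomputable def wstar (n k : ℕ) : ℝ :=
  if k = 0 then 6 * (n : ℝ) ^ 2 / (12 * (n : ℝ) ^ 3 + n + 3)
  else if k = n - 1 then 18 * (n : ℝ) ^ 2 / (12 * (n : ℝ) ^ 3 + n + 3)
  else 12 * (n : ℝ) ^ 2 / (12 * (n : ℝ) ^ 3 + n + 3)

open Finset

theorem wstar_succ_eq {m k : ℕ} (hm : 1 ≤ m) :
    wstar (m + 1) k = ((m : ℝ) + 1) ^ 2 / (12 * ((m : ℝ) + 1) ^ 3 + (m + 1) + 3) *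
      (12 - (if k = 0 then 6 else 0) + (if k = m then 6 else 0)) := by
  unfold wstar
  push_cast
  split_ifs <;> first | omega | ring

/-- Integration of `f` against the weights, in terms of the plain sum and the two end values. -/
theorem sum_wstar_mul {n : ℕ} (hn : 2 ≤ n) (f : ℕ → ℝ) :
    ∑ k ∈ range n, wstar n k * f k = (n : ℝ) ^ 2 / (12 * (n : ℝ) ^ 3 + n + 3) *
      (12 * ∑ k ∈ range n, f k - 6 * f 0 + 6 * f (n - 1)) := by
  obtain ⟨m, rfl⟩ : ∃ m, n = m + 1 := ⟨n - 1, by omega⟩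
  have hm : 1 ≤ m := by omega
  simp only [wstar_succ_eq hm, mul_assoc, ← mul_sum, add_mul, sub_mul, sum_add_distrib,
    sum_sub_distrib, ite_mul, zero_mul, sum_ite_eq', mem_range]
  simp

theorem sum_range_natCast (n : ℕ) : ∑ k ∈ range n, (k : ℝ) = n * (n - 1) / 2 := by
  induction n with
  | zero => simp
  | succ n ih => rw [sum_range_succ, ih]; push_cast; ring

theorem sum_range_natCast_sq (n : ℕ) :
    ∑ k ∈ range n, (k : ℝ) ^ 2 = n * (n - 1) * (2 * n - 1) / 6 := by
  induction n with
  | zero => simp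
  | succ n ih => rw [sum_range_succ, ih]; push_cast; ring

theorem sum_range_natCast_cube (n : ℕ) :
    ∑ k ∈ range n, (k : ℝ) ^ 3 = (n * (n - 1) / 2) ^ 2 := by
  induction n with
  | zero => simp
  | succ n ih => rw [sum_range_succ, ih]; push_cast; ring

theorem sum_range_natCast_pow_four (n : ℕ) :
    ∑ k ∈ range n, (k : ℝ) ^ 4 =
      n * (n - 1) * (2 * n - 1) * (3 * (n : ℝ) ^ 2 - 3 * n - 1) / 30 := by
  induction n with
  | zero => simp
  | succ n ih => rw [sum_range_succ, ih]; push_cast; ring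

theorem sum_range_abs_sub_cube_of_le {k n : ℕ} (h : n ≤ k) :
    ∑ l ∈ range n, |(k : ℝ) - l| ^ 3 =
      (k * (k + 1) / 2 : ℝ) ^ 2 - ((k - n) * (k - n + 1) / 2 : ℝ) ^ 2 := by
  induction n with
  | zero => simp
  | succ n ih =>
    have hk : (n : ℝ) ≤ k := by exact_mod_cast (by omega : n ≤ k)
    rw [sum_range_succ, ih (by omega), abs_of_nonneg (sub_nonneg.2 hk)]
    push_cast
    ring

theorem sum_range_abs_sub_cube {k n : ℕ} (h : k ≤ n) :
    ∑ l ∈ range n, |(k : ℝ) - l| ^ 3 =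
      (k * (k + 1) / 2 : ℝ) ^ 2 + ((n - k) * (n - k - 1) / 2 : ℝ) ^ 2 := by
  induction n, h using Nat.le_induction with
  | base => rw [sum_range_abs_sub_cube_of_le le_rfl]; ring
  | succ n h ih =>
    have hk : (k : ℝ) ≤ n := by exact_mod_cast h
    rw [sum_range_succ, ih, abs_of_nonpos (sub_nonpos.2 hk)]
    push_cast
    ring

theorem sum_wstar_mul_quartic {n : ℕ} (hn : 2 ≤ n) (a b c d e : ℝ) :
    ∑ k ∈ range n, wstar n k * (a + b * k + c * (k : ℝ) ^ 2 + d * (k : ℝ) ^ 3 + e * (k : ℝ) ^ 4) =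
      (n : ℝ) ^ 2 / (12 * (n : ℝ) ^ 3 + n + 3) *
        (a * (12 * n) + b * (6 * ((n : ℝ) ^ 2 - 1))
          + c * (2 * n * (n - 1) * (2 * n - 1) + 6 * ((n : ℝ) - 1) ^ 2)
          + d * (3 * (n * (n - 1)) ^ 2 + 6 * ((n : ℝ) - 1) ^ 3)
          + e * (2 * n * (n - 1) * (2 * n - 1) * (3 * (n : ℝ) ^ 2 - 3 * n - 1) / 5
            + 6 * ((n : ℝ) - 1) ^ 4)) := by
  rw [sum_wstar_mul hn]
  simp only [sum_add_distrib, ← mul_sum, sum_range_natCast, sum_range_natCast_sq,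
    sum_range_natCast_cube, sum_range_natCast_pow_four, sum_const, card_range, nsmul_eq_mul]
  rw [Nat.cast_sub (by omega)]
  push_cast
  ring

theorem sum_wstar_mul_abs_sub_cube {k n : ℕ} (hn : 2 ≤ n) (h : k < n) :
    ∑ l ∈ range n, wstar n l * |(k : ℝ) - l| ^ 3 =
      (n : ℝ) ^ 2 / (12 * (n : ℝ) ^ 3 + n + 3) *
        (3 * (k : ℝ) ^ 4 + 3 * (k : ℝ) ^ 2 + 3 * (n - k : ℝ) ^ 4 - 15 * (n - k : ℝ) ^ 2
          + 18 * (n - k : ℝ) - 6) := by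
  have hk : (k : ℝ) + 1 ≤ n := by exact_mod_cast h
  rw [sum_wstar_mul hn, sum_range_abs_sub_cube h.le, Nat.cast_sub (by omega)]
  push_cast
  rw [abs_of_nonneg (by simp), abs_of_nonpos (by linarith)]
  ring

/-- The double-sum identity from the proof of Lemma 2, where the bracketed
expression equals `∫_0^1 K(x, t_k) K(x, t_ℓ) dx` for `t_k = k/n`. -/
theorem stmt_14 (n : ℕ) (hn : 2 ≤ n) :
    (∑ k ∈ Finset.range n, ∑ l ∈ Finset.range n,
        wstar n k * wstar n l *
          (46/45 - ((k : ℝ)/n) ^ 2 / 6 + ((k : ℝ)/n) ^ 3 / 12 - ((k : ℝ)/n) ^ 4 / 24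
            + ((k : ℝ)/n) ^ 2 * ((l : ℝ)/n) / 4 - ((l : ℝ)/n) ^ 2 / 6
            + ((k : ℝ)/n) * ((l : ℝ)/n) ^ 2 / 4 - ((k : ℝ)/n) ^ 2 * ((l : ℝ)/n) ^ 2 / 4
            + ((l : ℝ)/n) ^ 3 / 12 - ((l : ℝ)/n) ^ 4 / 24
            + |(k : ℝ)/n - (l : ℝ)/n| ^ 3 / 12))
      = (720 * (n : ℝ) ^ 6 + (n : ℝ) ^ 2 + 60 * n - 45)
          / (5 * (12 * (n : ℝ) ^ 3 + n + 3) ^ 2) := by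
  have hn0 : (0 : ℝ) < n := by exact_mod_cast (by omega : 0 < n)
  have hD : 12 * (n : ℝ) ^ 3 + n + 3 ≠ 0 := by positivity
  set N : ℝ := (n : ℝ) with hN
  -- the moments of order `0` to `4` of the weights, without their common factor
  set M₀ : ℝ := 12 * N with hM₀
  set M₁ : ℝ := 6 * (N ^ 2 - 1) with hM₁
  set M₂ : ℝ := 2 * N * (N - 1) * (2 * N - 1) + 6 * (N - 1) ^ 2 with hM₂
  set M₃ : ℝ := 3 * (N * (N - 1)) ^ 2 + 6 * (N - 1) ^ 3 with hM₃
  set M₄ : ℝ := 2 * N * (N - 1) * (2 * N - 1) * (3 * N ^ 2 - 3 * N - 1) / 5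
    + 6 * (N - 1) ^ 4 with hM₄
  have inner : ∀ k ∈ range n, (∑ l ∈ range n, wstar n k * wstar n l *
          (46/45 - ((k : ℝ)/N) ^ 2 / 6 + ((k : ℝ)/N) ^ 3 / 12 - ((k : ℝ)/N) ^ 4 / 24
            + ((k : ℝ)/N) ^ 2 * ((l : ℝ)/N) / 4 - ((l : ℝ)/N) ^ 2 / 6
            + ((k : ℝ)/N) * ((l : ℝ)/N) ^ 2 / 4 - ((k : ℝ)/N) ^ 2 * ((l : ℝ)/N) ^ 2 / 4
            + ((l : ℝ)/N) ^ 3 / 12 - ((l : ℝ)/N) ^ 4 / 24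
            + |(k : ℝ)/N - (l : ℝ)/N| ^ 3 / 12)) =
      N ^ 2 / (12 * N ^ 3 + N + 3) * (wstar n k *
        ((46 / 45 * M₀ - M₂ / (6 * N ^ 2) + M₃ / (12 * N ^ 3) - M₄ / (24 * N ^ 4)
            + (3 * N ^ 4 - 15 * N ^ 2 + 18 * N - 6) / (12 * N ^ 3))
          + (M₂ / (4 * N ^ 3) + (-12 * N ^ 3 + 30 * N - 18) / (12 * N ^ 3)) * k
          + (-M₀ / (6 * N ^ 2) + M₁ / (4 * N ^ 3) - M₂ / (4 * N ^ 4)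
            + (18 * N ^ 2 - 12) / (12 * N ^ 3)) * (k : ℝ) ^ 2
          + (M₀ / (12 * N ^ 3) - 12 * N / (12 * N ^ 3)) * (k : ℝ) ^ 3
          + (-M₀ / (24 * N ^ 4) + 6 / (12 * N ^ 3)) * (k : ℝ) ^ 4)) := by
    intro k hk
    have key := sum_wstar_mul_quartic hn
      (46/45 - ((k : ℝ)/N) ^ 2 / 6 + ((k : ℝ)/N) ^ 3 / 12 - ((k : ℝ)/N) ^ 4 / 24)
      (((k : ℝ)/N) ^ 2 / N / 4)
      (-1 / (6 * N ^ 2) + (k : ℝ) / N / N ^ 2 / 4 - ((k : ℝ)/N) ^ 2 / N ^ 2 / 4)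
      (1 / (12 * N ^ 3)) (-1 / (24 * N ^ 4))
    have habs := sum_wstar_mul_abs_sub_cube hn (mem_range.1 hk)
    rw [← hN, ← hM₀, ← hM₁, ← hM₂, ← hM₃, ← hM₄] at key
    rw [← hN] at habs
    clear_value M₀ M₁ M₂ M₃ M₄
    have hsplit := congrArg₂ (fun x y => wstar n k * (x + 1 / (12 * N ^ 3) * y)) key habs
    simp only [mul_sum, ← sum_add_distrib] at hsplit
    refine (sum_congr rfl fun l _ => ?_).trans (hsplit.trans ?_)
    · rw [← sub_div, abs_div, abs_of_pos hn0]
      ring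
    · ring
  rw [sum_congr rfl inner, ← mul_sum, sum_wstar_mul_quartic hn, ← hN]
  rw [hM₀, hM₁, hM₂, hM₃, hM₄]
  field_simp
  ring
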